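/- Let r,q ≥ 1 with rq > 1. For every tag L ∈ {A,B} and indices 0 ≤ j ≤ r, 0 ≤ k ≤ q with (L,j,k) ≠ (A,0,0), the Morse number of the vertex labeled L^j_k (i.e., the Morse number i at the meander position σ_{rq}(a), where a is the axis position of the label) equals j+k−1 if L = A, and equals j+k if L = B. In particular, B^r_q is the unique vertex of maximal Morse number r+q. -/

import Mathlib

/-- Morse numbers `i_j` of a permutation `σ` of `{1,…,N}` (extended to `ℕ`),
via the recursion `i_1 = 0`,
`i_{j+1} = i_j + (-1)^(j+1) * sign (σ⁻¹(j+1) - σ⁻¹(j))`. -/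
def morse (σ : Equiv.Perm ℕ) : ℕ → ℤ
  | 0 => 0
  | 1 => 0
  | (j+2) => morse σ (j+1) +
      (-1)^(j+2) * Int.sign ((σ.symm (j+2) : ℤ) - (σ.symm (j+1) : ℤ))

/-- Zero numbers `z_{j k}`, recursion in the first index `j`, second index `k` fixed:
`z_{1k} = 0`, `z_{kk} = i_k`, `z_{k+1,k} = min (i_k, i_{k+1})`, and otherwise
`z_{j+1,k} = z_{jk} + ((-1)^(j+1)/2) * (sign (σ⁻¹(j+1) - σ⁻¹(k)) - sign (σ⁻¹(j) - σ⁻¹(k)))`. -/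
def zrec (σ : Equiv.Perm ℕ) (k : ℕ) : ℕ → ℤ
  | 0 => 0
  | 1 => 0
  | (j+2) =>
      if j+2 = k then morse σ k
      else if j+1 = k then min (morse σ k) (morse σ (k+1))
      else zrec σ k (j+1) +
        ((-1)^(j+2) * (Int.sign ((σ.symm (j+2) : ℤ) - (σ.symm k : ℤ))
          - Int.sign ((σ.symm (j+1) : ℤ) - (σ.symm k : ℤ)))) / 2

/-- The zero number `z_{m n}`. -/
def zfun (σ : Equiv.Perm ℕ) (m n : ℕ) : ℤ := zrec σ n m

/-- The connection digraph of a dissipative Morse permutation `σ` of `{1,…,N}`: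
an edge `m ⤳ n` iff `i_m = i_n + 1` and no `w` strictly between `m` and `n`
blocks, i.e. satisfies `z_{mw} = z_{wn} = z_{mn}`. -/
def hasEdge (N : ℕ) (σ : Equiv.Perm ℕ) (m n : ℕ) : Prop :=
  1 ≤ m ∧ m ≤ N ∧ 1 ≤ n ∧ n ≤ N ∧
  morse σ m = morse σ n + 1 ∧
  ¬ ∃ w : ℕ, min m n < w ∧ w < max m n ∧
      zfun σ m w = zfun σ w n ∧ zfun σ w n = zfun σ m n

/-- A dissipative permutation of `{1,…,N}`. -/
def Dissipative (N : ℕ) (σ : Equiv.Perm ℕ) : Prop :=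
  Set.BijOn σ (Set.Icc 1 N) (Set.Icc 1 N) ∧ σ 1 = 1 ∧ σ N = N

/-- The Morse property: all Morse numbers are nonnegative. -/
def MorseProp (N : ℕ) (σ : Equiv.Perm ℕ) : Prop :=
  ∀ j, 1 ≤ j → j ≤ N → 0 ≤ morse σ j

/-- Morse counts `μ(i) = #{j ∈ {1,…,N} : i_j = i}`. -/
def morseCount (N : ℕ) (σ : Equiv.Perm ℕ) (i : ℤ) : ℕ :=
  ((Finset.Icc 1 N).filter (fun j => morse σ j = i)).card

/-- The primitive 3-nose permutation `σ_{rq}` of `{1,…,N}`, `N = 2(r+1)(q+1)-1`,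
characterized by its defining relations, extended to a permutation of `ℕ`
fixing everything outside `{1,…,N}`. -/
def SigmaRQ (r q : ℕ) (σ : Equiv.Perm ℕ) : Prop :=
  (∀ a, a ∉ Set.Icc 1 (2*(r+1)*(q+1) - 1) → σ a = a) ∧
  (∀ j k, j ≤ r → k ≤ q →
    σ (2*((q+1)*j+k)+1) = 2*(j+(r+1)*k)+1) ∧
  (∀ j k, j ≤ r → k ≤ q → ¬(j = 0 ∧ k = 0) →
    σ (2*((q+1)*(r-j)+(q-k)+1)) = 2*(j+(r+1)*k))

/-- Tags `A`, `B` of equilibrium labels `A^j_k`, `B^j_k`. -/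
inductive Tag | A | B
deriving DecidableEq

/-- The axis position (`h_1`-position) of the label `L^j_k` for parameters `(r,q)`. -/
def axisPos (r q : ℕ) : Tag → ℕ → ℕ → ℕ
  | Tag.A, j, k => if Odd j then (q+1)*(j-1)+k+1 else (q+1)*(2*r+1-j)+(q-k)+1
  | Tag.B, j, k => if Odd j then (q+1)*j+(q-k)+1 else (q+1)*(2*r-j)+k+1

/-- The meander position (`h_0`-position) of the label `L^j_k` for parameters `(r,q)`. -/
def meanderPos (r q : ℕ) : Tag → ℕ → ℕ → ℕ
  | Tag.A, j, k => if Odd k then (r+1)*(2*q+1-k)+(2*r+1-j) else (r+1)*k+j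
  | Tag.B, j, k => if Odd k then (r+1)*(2*q+1-k)+j else (r+1)*(k+1)+(r-j)

/-- The suspension `σ̃` of a dissipative permutation `σ` of `{1,…,N}`:
`σ̃(1) = 1`, `σ̃(N+2) = N+2`, and `σ̃(a+1) = N+2 - σ(a)` for `1 ≤ a ≤ N`. -/
def IsSuspension (N : ℕ) (σ σt : Equiv.Perm ℕ) : Prop :=
  σt 1 = 1 ∧ σt (N+2) = N+2 ∧ ∀ a, 1 ≤ a → a ≤ N → σt (a+1) = N+2 - σ a

/-- The label `A^0_0` is the distinguished (formal) vertex `⋆`. -/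
def IsStar (L : Tag) (j k : ℕ) : Prop := L = Tag.A ∧ j = 0 ∧ k = 0

/-- Tag swap `A ↔ B`, used by the reversor. -/
def tagSwap : Tag → Tag
  | Tag.A => Tag.B
  | Tag.B => Tag.A


namespace Stmt8

def val (L : Tag) (j k : ℕ) : ℤ := if L = Tag.A then (j : ℤ) + (k : ℤ) - 1 else (j : ℤ) + (k : ℤ)

lemma axA (r q j k : ℕ) (hj : j ≤ r) (hk : k ≤ q) : ((axisPos r q Tag.A j k : ℕ) : ℤ) =
    if Odd j then ((q:ℤ)+1)*(j-1)+k+1 else ((q:ℤ)+1)*(2*r+1-j)+(q-k)+1 := by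
  split_ifs with h
  · simp only [axisPos, if_pos h]
    have : 1 ≤ j := h.pos
    push_cast [this]; ring
  · simp only [axisPos, if_neg h]
    push_cast [hk, (by omega : j ≤ 2*r+1)]; ring

lemma axB (r q j k : ℕ) (hj : j ≤ r) (hk : k ≤ q) : ((axisPos r q Tag.B j k : ℕ) : ℤ) =
    if Odd j then ((q:ℤ)+1)*j+(q-k)+1 else ((q:ℤ)+1)*(2*r-j)+k+1 := by
  split_ifs with h
  · simp only [axisPos, if_pos h]
    push_cast [hk]; ring
  · simp only [axisPos, if_neg h]
    push_cast [hk, (by omega : j ≤ 2*r)]; ring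

lemma meA (r q j k : ℕ) (hj : j ≤ r) (hk : k ≤ q) : ((meanderPos r q Tag.A j k : ℕ) : ℤ) =
    if Odd k then ((r:ℤ)+1)*(2*q+1-k)+(2*r+1-j) else ((r:ℤ)+1)*k+j := by
  split_ifs with h
  · simp only [meanderPos, if_pos h]
    push_cast [(by omega : j ≤ 2*r+1), (by omega : k ≤ 2*q+1)]; ring
  · simp only [meanderPos, if_neg h]
    push_cast; ring

lemma meB (r q j k : ℕ) (hj : j ≤ r) (hk : k ≤ q) : ((meanderPos r q Tag.B j k : ℕ) : ℤ) =
    if Odd k then ((r:ℤ)+1)*(2*q+1-k)+j else ((r:ℤ)+1)*(k+1)+(r-j) := by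
  split_ifs with h
  · simp only [meanderPos, if_pos h]
    push_cast [(by omega : k ≤ 2*q+1)]; ring
  · simp only [meanderPos, if_neg h]
    push_cast [hj]; ring

lemma odd1 (a : ℕ) : Odd (2*a+1) := ⟨a, rfl⟩
lemma odd0 (a : ℕ) : ¬ Odd (2*a) := by simp
lemma par (a : ℕ) : ∃ b, a = 2*b ∨ a = 2*b+1 := ⟨a/2, by omega⟩

lemma sig_odd {r q : ℕ} {σ : Equiv.Perm ℕ} (hσ : SigmaRQ r q σ) (x y j k : ℕ) (hj : j ≤ r) (hk : k ≤ q)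
    (hx : (x:ℤ) = 2*((q+1)*j+k)+1) (hy : (y:ℤ) = 2*(j+(r+1)*k)+1) : σ x = y := by
  have := hσ.2.1 j k hj hk
  have h1 : x = 2*((q+1)*j+k)+1 := by exact_mod_cast hx
  have h2 : y = 2*(j+(r+1)*k)+1 := by exact_mod_cast hy
  rw [h1, h2, this]

lemma sig_even {r q : ℕ} {σ : Equiv.Perm ℕ} (hσ : SigmaRQ r q σ) (x y j k : ℕ) (hj : j ≤ r) (hk : k ≤ q)
    (h0 : ¬(j = 0 ∧ k = 0))
    (hx : (x:ℤ) = 2*((q+1)*(r-j)+(q-k)+1)) (hy : (y:ℤ) = 2*(j+(r+1)*k)) : σ x = y := by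
  have := hσ.2.2 j k hj hk h0
  have h1 : x = 2*((q+1)*(r-j)+(q-k)+1) := by zify [hj, hk]; exact hx
  have h2 : y = 2*(j+(r+1)*k) := by exact_mod_cast hy
  rw [h1, h2, this]

lemma sig_ax {r q : ℕ} {σ : Equiv.Perm ℕ} (hσ : SigmaRQ r q σ) (L : Tag) (j k : ℕ) (hj : j ≤ r)
    (hk : k ≤ q) (h0 : ¬(L = Tag.A ∧ j = 0 ∧ k = 0)) :
    σ (axisPos r q L j k) = meanderPos r q L j k := by
  obtain ⟨a, ha⟩ := par j
  obtain ⟨b, hb⟩ := par k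
  have ha' : a ≤ r := by omega
  have hb' : b ≤ q := by omega
  cases L
  · have A := axA r q j k hj hk
    have M := meA r q j k hj hk
    rcases ha with rfl | rfl <;> rcases hb with rfl | rfl <;>
      simp only [odd1, odd0, if_true, if_false] at A M
    · refine sig_even hσ _ _ a b ha' hb' (by simp at h0; omega) ?_ ?_
      · rw [A]; push_cast; ring
      · rw [M]; push_cast; ring
    · refine sig_odd hσ _ _ (r-a) (q-b) (by omega) (by omega) ?_ ?_
      · rw [A]; push_cast [ha', hb']; ring
      · rw [M]; push_cast [ha', hb']; ring
    · refine sig_odd hσ _ _ a b (by omega) (by omega) ?_ ?_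
      · rw [A]; push_cast [ha', hb']; ring
      · rw [M]; push_cast [ha', hb']; ring
    · refine sig_even hσ _ _ (r-a) (q-b) (by omega) (by omega) (by omega) ?_ ?_
      · rw [A]; push_cast [ha', hb']; ring
      · rw [M]; push_cast [ha', hb']; ring
  · have A := axB r q j k hj hk
    have M := meB r q j k hj hk
    rcases ha with rfl | rfl <;> rcases hb with rfl | rfl <;>
      simp only [odd1, odd0, if_true, if_false] at A M
    · refine sig_odd hσ _ _ (r-a) b (by omega) hb' ?_ ?_
      · rw [A]; push_cast [ha']; ring
      · rw [M]; push_cast [ha']; ring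
    · refine sig_even hσ _ _ a (q-b) (by omega) (by omega) (by omega) ?_ ?_
      · rw [A]; push_cast [ha', hb']; ring
      · rw [M]; push_cast [ha', hb']; ring
    · refine sig_even hσ _ _ (r-a) b (by omega) (by omega) (by omega) ?_ ?_
      · rw [A]; push_cast [ha', hb']; ring
      · rw [M]; push_cast [ha', hb']; ring
    · refine sig_odd hσ _ _ a (q-b) (by omega) (by omega) ?_ ?_
      · rw [A]; push_cast [ha', hb']; ring
      · rw [M]; push_cast [ha', hb']; ring

lemma sgnA (r q j k : ℕ) (hj : j ≤ r) (hk : k ≤ q) :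
    (-1:ℤ)^(meanderPos r q Tag.A j k) = (-1)^(j+k) := by
  have M := meA r q j k hj hk
  have : Even (meanderPos r q Tag.A j k) ↔ Even (j+k) := by
    rw [← Int.even_coe_nat, M]
    obtain ⟨b, rfl | rfl⟩ := par k
    · rw [if_neg (odd0 b)]
      have e : ((r:ℤ)+1)*(2*b:ℕ)+j = 2*(((r:ℤ)+1)*b)+j := by push_cast; ring
      rw [e, Int.even_iff, Nat.even_iff]; omega
    · rw [if_pos (odd1 b)]
      have e : ((r:ℤ)+1)*(2*q+1-(2*b+1:ℕ))+(2*r+1-j) = 2*(((r:ℤ)+1)*(q-b)+r)+1-j := by push_cast; ring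
      rw [e, Int.even_iff, Nat.even_iff]; omega
  by_cases h : Even (j+k)
  · rw [h.neg_one_pow, (this.2 h).neg_one_pow]
  · rw [(Nat.not_even_iff_odd.1 h).neg_one_pow,
      (Nat.not_even_iff_odd.1 (mt this.1 h)).neg_one_pow]

lemma sgnB (r q j k : ℕ) (hj : j ≤ r) (hk : k ≤ q) :
    (-1:ℤ)^(meanderPos r q Tag.B j k) = (-1)^(j+k+1) := by
  have M := meB r q j k hj hk
  have : Even (meanderPos r q Tag.B j k) ↔ Even (j+k+1) := by
    rw [← Int.even_coe_nat, M]
    obtain ⟨b, rfl | rfl⟩ := par k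
    · rw [if_neg (odd0 b)]
      have e : ((r:ℤ)+1)*((2*b:ℕ)+1)+(r-j) = 2*(((r:ℤ)+1)*b+r)+1-j := by push_cast; ring
      rw [e, Int.even_iff, Nat.even_iff]; omega
    · rw [if_pos (odd1 b)]
      have e : ((r:ℤ)+1)*(2*q+1-(2*b+1:ℕ))+j = 2*(((r:ℤ)+1)*(q-b))+j := by push_cast; ring
      rw [e, Int.even_iff, Nat.even_iff]; omega
  by_cases h : Even (j+k+1)
  · rw [h.neg_one_pow, (this.2 h).neg_one_pow]
  · rw [(Nat.not_even_iff_odd.1 h).neg_one_pow,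
      (Nat.not_even_iff_odd.1 (mt this.1 h)).neg_one_pow]

/-- Sign condition: the increment `d` is realised with the parity number `p`. -/
lemma inc (x y p : ℕ) (d : ℤ)
    (h : (d = 1 ∧ Even p ∧ (x:ℤ) < y) ∨ (d = 1 ∧ Odd p ∧ (y:ℤ) < x) ∨
      (d = -1 ∧ Even p ∧ (y:ℤ) < x) ∨ (d = -1 ∧ Odd p ∧ (x:ℤ) < y)) :
    d = (-1)^p * Int.sign ((y:ℤ) - x) := by
  rcases h with ⟨rfl, hp, h⟩ | ⟨rfl, hp, h⟩ | ⟨rfl, hp, h⟩ | ⟨rfl, hp, h⟩ <;> rw [hp.neg_one_pow]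
  · rw [Int.sign_eq_one_of_pos (by linarith)]; norm_num
  · rw [Int.sign_eq_neg_one_of_neg (by linarith)]; norm_num
  · rw [Int.sign_eq_neg_one_of_neg (by linarith)]; norm_num
  · rw [Int.sign_eq_one_of_pos (by linarith)]; norm_num

def Step (r q : ℕ) (L' : Tag) (j' k' : ℕ) (L : Tag) (j k : ℕ) : Prop :=
  meanderPos r q L j k = meanderPos r q L' j' k' + 1 ∧
  val L j k = val L' j' k' + (-1)^(meanderPos r q L j k) *
    Int.sign ((axisPos r q L j k : ℤ) - (axisPos r q L' j' k' : ℤ))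

lemma odd_succ_iff (a : ℕ) : Odd (a+1) ↔ ¬ Odd a := by simp [parity_simps]

/-- A, even k -/
lemma stepA0 (r q j k : ℕ) (hj : j + 1 ≤ r) (hk : k ≤ q) (hk2 : ¬ Odd k) :
    Step r q Tag.A j k Tag.A (j+1) k := by
  have A := axA r q j k (by omega) hk
  have A' := axA r q (j+1) k (by omega) hk
  have M := meA r q j k (by omega) hk
  have M' := meA r q (j+1) k (by omega) hk
  rw [if_neg hk2] at M M'
  refine ⟨by zify; rw [M, M']; push_cast; ring, ?_⟩
  rw [sgnA _ _ _ _ hj hk, ← inc _ _ _ 1]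
  · simp [val]; ring
  · have hj' : (j:ℤ)+1 ≤ r := by exact_mod_cast hj
    have hk' : (k:ℤ) ≤ q := by exact_mod_cast hk
    by_cases h : Odd j
    · left
      refine ⟨rfl, by clear A A' M M'; simp only [Nat.odd_iff, Nat.even_iff] at *; omega, ?_⟩
      simp only [odd_succ_iff, h, not_true, if_true, if_false] at A A'
      rw [A, A']; push_cast; nlinarith
    · right; left
      refine ⟨rfl, by clear A A' M M'; simp only [Nat.odd_iff, Nat.even_iff] at *; omega, ?_⟩
      simp only [odd_succ_iff, h, not_false_iff, if_true, if_false] at A A'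
      rw [A, A']; push_cast; nlinarith

/-- A, odd k -/
lemma stepA1 (r q j k : ℕ) (hj : j + 1 ≤ r) (hk : k ≤ q) (hk2 : Odd k) :
    Step r q Tag.A (j+1) k Tag.A j k := by
  have A := axA r q j k (by omega) hk
  have A' := axA r q (j+1) k (by omega) hk
  have M := meA r q j k (by omega) hk
  have M' := meA r q (j+1) k (by omega) hk
  rw [if_pos hk2] at M M'
  refine ⟨by zify; rw [M, M']; push_cast; ring, ?_⟩
  rw [sgnA _ _ _ _ (by omega) hk, ← inc _ _ _ (-1)]
  · simp [val]; ring
  · have hj' : (j:ℤ)+1 ≤ r := by exact_mod_cast hj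
    have hk' : (k:ℤ) ≤ q := by exact_mod_cast hk
    by_cases h : Odd j
    · right; right; left
      refine ⟨rfl, by clear A A' M M'; simp only [Nat.odd_iff, Nat.even_iff] at *; omega, ?_⟩
      simp only [odd_succ_iff, h, not_true, if_true, if_false] at A A'
      rw [A, A']; push_cast; nlinarith
    · right; right; right
      refine ⟨rfl, by clear A A' M M'; simp only [Nat.odd_iff, Nat.even_iff] at *; omega, ?_⟩
      simp only [odd_succ_iff, h, not_false_iff, if_true, if_false] at A A'
      rw [A, A']; push_cast; nlinarith

lemma stepB0 (r q j k : ℕ) (hj : j + 1 ≤ r) (hk : k ≤ q) (hk2 : ¬ Odd k) :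
    Step r q Tag.B (j+1) k Tag.B j k := by
  have A := axB r q j k (by omega) hk
  have A' := axB r q (j+1) k (by omega) hk
  have M := meB r q j k (by omega) hk
  have M' := meB r q (j+1) k (by omega) hk
  rw [if_neg hk2] at M M'
  refine ⟨by zify; rw [M, M']; push_cast; ring, ?_⟩
  rw [sgnB _ _ _ _ (by omega) hk, ← inc _ _ _ (-1)]
  · simp [val]; ring
  · have hj' : (j:ℤ)+1 ≤ r := by exact_mod_cast hj
    have hk' : (k:ℤ) ≤ q := by exact_mod_cast hk
    by_cases h : Odd j
    · right; right; left
      refine ⟨rfl, by clear A A' M M'; simp only [Nat.odd_iff, Nat.even_iff] at *; omega, ?_⟩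
      simp only [odd_succ_iff, h, not_true, if_true, if_false] at A A'
      rw [A, A']; push_cast; nlinarith
    · right; right; right
      refine ⟨rfl, by clear A A' M M'; simp only [Nat.odd_iff, Nat.even_iff] at *; omega, ?_⟩
      simp only [odd_succ_iff, h, not_false_iff, if_true, if_false] at A A'
      rw [A, A']; push_cast; nlinarith

lemma stepB1 (r q j k : ℕ) (hj : j + 1 ≤ r) (hk : k ≤ q) (hk2 : Odd k) :
    Step r q Tag.B j k Tag.B (j+1) k := by
  have A := axB r q j k (by omega) hk
  have A' := axB r q (j+1) k (by omega) hk
  have M := meB r q j k (by omega) hk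
  have M' := meB r q (j+1) k (by omega) hk
  rw [if_pos hk2] at M M'
  refine ⟨by zify; rw [M, M']; push_cast; ring, ?_⟩
  rw [sgnB _ _ _ _ (by omega) hk, ← inc _ _ _ 1]
  · simp [val]; ring
  · have hj' : (j:ℤ)+1 ≤ r := by exact_mod_cast hj
    have hk' : (k:ℤ) ≤ q := by exact_mod_cast hk
    by_cases h : Odd j
    · left
      refine ⟨rfl, by clear A A' M M'; simp only [Nat.odd_iff, Nat.even_iff] at *; omega, ?_⟩
      simp only [odd_succ_iff, h, not_true, if_true, if_false] at A A'
      rw [A, A']; push_cast; nlinarith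
    · right; left
      refine ⟨rfl, by clear A A' M M'; simp only [Nat.odd_iff, Nat.even_iff] at *; omega, ?_⟩
      simp only [odd_succ_iff, h, not_false_iff, if_true, if_false] at A A'
      rw [A, A']; push_cast; nlinarith

/-- turn A^r_k → B^r_k, even k -/
lemma stepAB (r q k : ℕ) (hk : k ≤ q) (hk2 : ¬ Odd k) : Step r q Tag.A r k Tag.B r k := by
  have A := axA r q r k le_rfl hk
  have A' := axB r q r k le_rfl hk
  have M := meA r q r k le_rfl hk
  have M' := meB r q r k le_rfl hk
  rw [if_neg hk2] at M M'
  refine ⟨by zify; rw [M, M']; push_cast; ring, ?_⟩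
  rw [sgnB _ _ _ _ le_rfl hk, ← inc _ _ _ 1]
  · simp [val]
  · have hk' : (k:ℤ) ≤ q := by exact_mod_cast hk
    have hkq : (k:ℤ) ≠ q + 1 := by omega
    by_cases h : Odd r
    · left
      refine ⟨rfl, by clear A A' M M'; simp only [Nat.odd_iff, Nat.even_iff] at *; omega, ?_⟩
      simp only [h, if_true] at A A'
      rw [A, A']; nlinarith
    · right; left
      refine ⟨rfl, by clear A A' M M'; simp only [Nat.odd_iff, Nat.even_iff] at *; omega, ?_⟩
      simp only [h, if_false] at A A'
      rw [A, A']; nlinarith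

lemma stepBA (r q k : ℕ) (hk : k ≤ q) (hk2 : Odd k) : Step r q Tag.B r k Tag.A r k := by
  have A := axA r q r k le_rfl hk
  have A' := axB r q r k le_rfl hk
  have M := meA r q r k le_rfl hk
  have M' := meB r q r k le_rfl hk
  rw [if_pos hk2] at M M'
  refine ⟨by zify; rw [M, M']; push_cast; ring, ?_⟩
  rw [sgnA _ _ _ _ le_rfl hk, ← inc _ _ _ (-1)]
  · simp [val]; ring
  · have hk' : (k:ℤ) ≤ q := by exact_mod_cast hk
    by_cases h : Odd r
    · right; right; left
      refine ⟨rfl, by clear A A' M M'; simp only [Nat.odd_iff, Nat.even_iff] at *; omega, ?_⟩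
      simp only [h, if_true] at A A'
      rw [A, A']; nlinarith
    · right; right; right
      refine ⟨rfl, by clear A A' M M'; simp only [Nat.odd_iff, Nat.even_iff] at *; omega, ?_⟩
      simp only [h, if_false] at A A'
      rw [A, A']; nlinarith

/-- turn B^0_k → A^0_{k+2}, even k -/
lemma stepBA0 (r q k : ℕ) (hk : k + 2 ≤ q) (hk2 : ¬ Odd k) : Step r q Tag.B 0 k Tag.A 0 (k+2) := by
  have hk3 : ¬ Odd (k+2) := by simpa [parity_simps] using hk2
  have A := axB r q 0 k (by omega) (by omega)
  have A' := axA r q 0 (k+2) (by omega) hk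
  have M := meB r q 0 k (by omega) (by omega)
  have M' := meA r q 0 (k+2) (by omega) hk
  rw [if_neg hk2] at M
  rw [if_neg hk3] at M'
  rw [if_neg (by simp)] at A A'
  refine ⟨by zify; rw [M, M']; push_cast; ring, ?_⟩
  rw [sgnA _ _ _ _ (by omega) hk, ← inc _ _ _ 1]
  · simp [val]; ring
  · have hk' : (k:ℤ) + 2 ≤ q := by exact_mod_cast hk
    left
    refine ⟨rfl, by clear A A' M M'; simp only [Nat.odd_iff, Nat.even_iff] at *; omega, ?_⟩
    rw [A, A']; push_cast; nlinarith

lemma stepAB0 (r q k : ℕ) (hk : k + 2 ≤ q) (hk2 : Odd k) : Step r q Tag.A 0 (k+2) Tag.B 0 k := by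
  have hk3 : Odd (k+2) := by simpa [parity_simps] using hk2
  have A := axB r q 0 k (by omega) (by omega)
  have A' := axA r q 0 (k+2) (by omega) hk
  have M := meB r q 0 k (by omega) (by omega)
  have M' := meA r q 0 (k+2) (by omega) hk
  rw [if_pos hk2] at M
  rw [if_pos hk3] at M'
  rw [if_neg (by simp)] at A A'
  refine ⟨by zify; rw [M, M']; push_cast; ring, ?_⟩
  rw [sgnB _ _ _ _ (by omega) (by omega), ← inc _ _ _ (-1)]
  · simp [val]; ring
  · have hk' : (k:ℤ) + 2 ≤ q := by exact_mod_cast hk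
    right; right; left
    refine ⟨rfl, by clear A A' M M'; simp only [Nat.odd_iff, Nat.even_iff] at *; omega, ?_⟩
    rw [A, A']; push_cast; nlinarith

/-- odd q -/
lemma stepBB1 (r k : ℕ) (hk2 : ¬ Odd k) : Step r (k+1) Tag.B 0 k Tag.B 0 (k+1) := by
  have hk3 : Odd (k+1) := by rwa [odd_succ_iff]
  have A := axB r (k+1) 0 k (by omega) (by omega)
  have A' := axB r (k+1) 0 (k+1) (by omega) le_rfl
  have M := meB r (k+1) 0 k (by omega) (by omega)
  have M' := meB r (k+1) 0 (k+1) (by omega) le_rfl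
  rw [if_neg hk2] at M
  rw [if_pos hk3] at M'
  rw [if_neg (by simp)] at A A'
  refine ⟨by zify; rw [M, M']; push_cast; ring, ?_⟩
  rw [sgnB _ _ _ _ (by omega) le_rfl, ← inc _ _ _ 1]
  · simp [val]
  · left
    refine ⟨rfl, by clear A A' M M'; simp only [Nat.odd_iff, Nat.even_iff] at *; omega, ?_⟩
    rw [A, A']; push_cast; linarith

/-- even q -/
lemma stepBB0 (r k : ℕ) (hk2 : Odd k) : Step r (k+1) Tag.B 0 (k+1) Tag.B 0 k := by
  have hk3 : ¬ Odd (k+1) := by rw [odd_succ_iff]; simpa using hk2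
  have A := axB r (k+1) 0 k (by omega) (by omega)
  have A' := axB r (k+1) 0 (k+1) (by omega) le_rfl
  have M := meB r (k+1) 0 k (by omega) (by omega)
  have M' := meB r (k+1) 0 (k+1) (by omega) le_rfl
  rw [if_pos hk2] at M
  rw [if_neg hk3] at M'
  rw [if_neg (by simp)] at A A'
  refine ⟨by zify; rw [M, M']; push_cast; ring, ?_⟩
  rw [sgnB _ _ _ _ (by omega) (by omega), ← inc _ _ _ (-1)]
  · simp [val]
  · right; right; left
    refine ⟨rfl, by clear A A' M M'; simp only [Nat.odd_iff, Nat.even_iff] at *; omega, ?_⟩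
    rw [A, A']; push_cast; linarith

lemma pred (r q : ℕ) (L : Tag) (j k : ℕ) (hj : j ≤ r) (hk : k ≤ q)
    (h0 : ¬(L = Tag.A ∧ j = 0 ∧ k = 0)) :
    ∃ L' j' k', j' ≤ r ∧ k' ≤ q ∧ Step r q L' j' k' L j k := by
  by_cases ho : Odd k
  · cases L
    · rcases hj.lt_or_eq with h | rfl
      · exact ⟨_, _, _, h, hk, stepA1 r q j k h hk ho⟩
      · exact ⟨_, _, _, le_rfl, hk, stepBA j q k hk ho⟩
    · rcases j with _ | j
      · rcases hk.lt_or_eq with h | rfl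
        · rcases (show k + 1 ≤ q from h).lt_or_eq with h | rfl
          · exact ⟨_, _, _, hj, h, stepAB0 r q k h ho⟩
          · exact ⟨_, _, _, hj, le_rfl, stepBB0 r k ho⟩
        · rcases k with _ | k
          · simp at ho
          · exact ⟨_, _, _, hj, by omega, stepBB1 r k ((odd_succ_iff k).1 ho)⟩
      · exact ⟨_, _, _, by omega, hk, stepB1 r q j k hj hk ho⟩
  · cases L
    · rcases j with _ | j
      · rcases k with _ | _ | k
        · simp at h0
        · simp at ho
        · exact ⟨_, _, _, hj, by omega,
            stepBA0 r q k hk (by simpa [parity_simps] using ho)⟩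
      · exact ⟨_, _, _, by omega, hk, stepA0 r q j k hj hk ho⟩
    · rcases hj.lt_or_eq with h | rfl
      · exact ⟨_, _, _, h, hk, stepB0 r q j k h hk ho⟩
      · exact ⟨_, _, _, le_rfl, hk, stepAB j q k hk ho⟩

lemma main {r q : ℕ} {σ : Equiv.Perm ℕ} (hσ : SigmaRQ r q σ) (m : ℕ) :
    ∀ (L : Tag) (j k : ℕ), j ≤ r → k ≤ q → ¬(L = Tag.A ∧ j = 0 ∧ k = 0) →
      meanderPos r q L j k = m → morse σ m = val L j k := by
  induction m with
  | zero =>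
    intro L j k hj hk h0 hm
    obtain ⟨L', j', k', hj', hk', hs⟩ := pred r q L j k hj hk h0
    have := hs.1
    omega
  | succ m ih =>
    intro L j k hj hk h0 hm
    obtain ⟨L', j', k', hj', hk', hs1, hs2⟩ := pred r q L j k hj hk h0
    by_cases h0' : L' = Tag.A ∧ j' = 0 ∧ k' = 0
    · obtain ⟨rfl, rfl, rfl⟩ := h0'
      have e : meanderPos r q Tag.A 0 0 = 0 := by simp [meanderPos]
      have A := axA r q 0 0 (by omega) (by omega)
      have hm0 : m = 0 := by omega
      subst hm0
      have h1 : axisPos r q L j k ≤ 2*(r+1)*(q+1)-1 := by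
        by_contra hc
        have h2 := hσ.1 (axisPos r q L j k) (by simp only [Set.mem_Icc]; omega)
        rw [sig_ax hσ L j k hj hk h0, hm] at h2
        have : 1 ≤ r * q + r + q + 1 := by omega
        have : 2*(r+1)*(q+1) = 2*(r*q+r+q+1) := by ring
        omega
      have h3 : axisPos r q Tag.A 0 0 = 2*(r+1)*(q+1) := by
        simp [axisPos]; ring
      have h4 : 0 < 2*(r+1)*(q+1) := by positivity
      rw [hs2, hm, Int.sign_eq_neg_one_of_neg (by omega)]
      simp [val, morse]
    · have hm' : meanderPos r q L' j' k' = m := by omega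
      have i := ih L' j' k' hj' hk' h0' hm'
      have s := sig_ax hσ L j k hj hk h0
      have s' := sig_ax hσ L' j' k' hj' hk' h0'
      rw [hm] at s
      rw [hm'] at s'
      rcases m with _ | m
      · obtain ⟨L'', j'', k'', hj'', hk'', hs⟩ := pred r q L' j' k' hj' hk' h0'
        have := hs.1
        omega
      · have t : σ.symm (m+1+1) = axisPos r q L j k := by rw [← s]; simp
        have t' : σ.symm (m+1) = axisPos r q L' j' k' := by rw [← s']; simp
        rw [hs2, ← i, hm, morse, t, t']

lemma surj (r q m : ℕ) (h1 : 1 ≤ m) (h2 : m ≤ 2*(r+1)*(q+1)-1) :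
    ∃ L j k, j ≤ r ∧ k ≤ q ∧ ¬(L = Tag.A ∧ j = 0 ∧ k = 0) ∧ meanderPos r q L j k = m := by
  have key : ∃ L j k, j ≤ r ∧ k ≤ q ∧ meanderPos r q L j k = m := by
    obtain ⟨s, t, ht, hm⟩ : ∃ s t, t ≤ r ∧ m = (r+1)*s+t :=
      ⟨m/(r+1), m%(r+1), Nat.lt_succ_iff.1 (Nat.mod_lt _ (by omega)), (Nat.div_add_mod _ _).symm⟩
    have hs : s < 2*(q+1) := by
      by_contra hc
      push Not at hc
      have : (r+1)*(2*(q+1)) ≤ (r+1)*s := Nat.mul_le_mul_left _ hc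
      have e : 2*(r+1)*(q+1) = (r+1)*(2*(q+1)) := by ring
      omega
    obtain ⟨b, rfl | rfl⟩ := par s
    · by_cases h : 2*b ≤ q
      · refine ⟨Tag.A, t, 2*b, ht, h, ?_⟩
        zify; rw [meA _ _ _ _ ht h, if_neg (odd0 b), hm]; push_cast; ring
      · have o : Odd (2*q+1-2*b) := ⟨q-b, by omega⟩
        refine ⟨Tag.B, t, 2*q+1-2*b, ht, by omega, ?_⟩
        zify; rw [meB _ _ _ _ ht (by omega), if_pos o, hm]
        push_cast [(by omega : 2*b ≤ 2*q+1)]; ring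
    · by_cases h : 2*b ≤ q
      · refine ⟨Tag.B, r-t, 2*b, by omega, h, ?_⟩
        zify; rw [meB _ _ _ _ (by omega) h, if_neg (odd0 b), hm]; push_cast [ht]; ring
      · have o : Odd (2*q+1-2*b) := ⟨q-b, by omega⟩
        refine ⟨Tag.A, r-t, 2*q+1-2*b, by omega, by omega, ?_⟩
        zify; rw [meA _ _ _ _ (by omega) (by omega), if_pos o, hm]
        push_cast [(by omega : 2*b ≤ 2*q+1), ht]; ring
  obtain ⟨L, j, k, hj, hk, h⟩ := key
  refine ⟨L, j, k, hj, hk, ?_, h⟩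
  rintro ⟨rfl, rfl, rfl⟩
  simp [meanderPos] at h
  omega

end Stmt8

/-- Morse numbers of the labeled vertices: `i(A^j_k) = j+k-1`,
`i(B^j_k) = j+k`; and `B^r_q` is the unique vertex of maximal Morse number `r+q`. -/
theorem stmt_8 (r q : ℕ) (hr : 1 ≤ r) (hq : 1 ≤ q) (hrq : 1 < r*q)
    (σ : Equiv.Perm ℕ) (hσ : SigmaRQ r q σ) :
    (∀ (L : Tag) (j k : ℕ), j ≤ r → k ≤ q → ¬(L = Tag.A ∧ j = 0 ∧ k = 0) →
      morse σ (σ (axisPos r q L j k))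
        = (if L = Tag.A then (j : ℤ) + (k : ℤ) - 1 else (j : ℤ) + (k : ℤ))) ∧
    (∀ m, 1 ≤ m → m ≤ 2*(r+1)*(q+1)-1 →
      (morse σ m = (r : ℤ) + (q : ℤ) ↔ m = σ (axisPos r q Tag.B r q))) := by
  have hA : ∀ (L : Tag) (j k : ℕ), j ≤ r → k ≤ q → ¬(L = Tag.A ∧ j = 0 ∧ k = 0) →
      morse σ (σ (axisPos r q L j k)) = Stmt8.val L j k := fun L j k hj hk h0 =>
    Stmt8.main hσ _ L j k hj hk h0 (Stmt8.sig_ax hσ L j k hj hk h0).symm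
  refine ⟨hA, fun m h1 h2 => ⟨fun h => ?_, ?_⟩⟩
  · obtain ⟨L, j, k, hj, hk, h0, rfl⟩ := Stmt8.surj r q m h1 h2
    rw [Stmt8.main hσ _ L j k hj hk h0 rfl] at h
    cases L
    · simp [Stmt8.val] at h
      omega
    · simp [Stmt8.val] at h
      obtain rfl : j = r := by omega
      obtain rfl : k = q := by omega
      rw [Stmt8.sig_ax hσ _ _ _ hj hk h0]
  · rintro rfl
    rw [hA Tag.B r q le_rfl le_rfl (by simp)]
    simp [Stmt8.val]
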